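/- Fix k > 0, c > 0, t ∈ ℝ, F ∈ ℝ, and z0 ∈ ℝ. Suppose R : ℝ → ℝ is differentiable and satisfies, for all q, z0 = R(q) + (1/k)·e^{k(R(q) − F)}·cos(k(q − c·t)), and suppose e^{k(R(q) − F)} < 1 for all q. Then R'(q) = 0 if and only if sin(k(q − c·t)) = 0; moreover at any such critical point q* one has z0 = R(q*) ± (1/k)·e^{k(R(q*) − F)} (with sign + when cos(k(q* − ct)) = 1 and sign − when cos(k(q* − ct)) = −1). -/

import Mathlib

/-- The label function `R(q)` describing a fixed depth has critical points exactly where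
`sin(k(q − ct)) = 0`, and at such points `z0 = R ± (1/k)·e^{k(R − F)}`. -/
theorem stmt6 (k c t F z0 : ℝ) (hk : 0 < k) (hc : 0 < c)
    (R : ℝ → ℝ) (hR : Differentiable ℝ R)
    (heq : ∀ q, z0 = R q + (1 / k) * Real.exp (k * (R q - F)) * Real.cos (k * (q - c * t)))
    (hlt : ∀ q, Real.exp (k * (R q - F)) < 1) :
    ∀ q, (deriv R q = 0 ↔ Real.sin (k * (q - c * t)) = 0) ∧
      (deriv R q = 0 →
        (Real.cos (k * (q - c * t)) = 1 →
          z0 = R q + (1 / k) * Real.exp (k * (R q - F))) ∧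
        (Real.cos (k * (q - c * t)) = -1 →
          z0 = R q - (1 / k) * Real.exp (k * (R q - F)))) := by
  intro q
  set D := deriv R q with hD
  have hRd : HasDerivAt R D q := (hR q).hasDerivAt
  have h1 : HasDerivAt (fun x => Real.exp (k * (R x - F)))
      (Real.exp (k * (R q - F)) * (k * D)) q := ((hRd.sub_const F).const_mul k).exp
  have h2 : HasDerivAt (fun x : ℝ => Real.cos (k * (x - c * t)))
      (-Real.sin (k * (q - c * t)) * (k * 1)) q :=
    (((hasDerivAt_id q).sub_const (c * t)).const_mul k).cos
  have h3 := hRd.add ((h1.const_mul (1 / k)).mul h2)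
  have h4 : HasDerivAt (fun _ : ℝ => z0) 0 q := hasDerivAt_const q z0
  have h5 : (fun _ : ℝ => z0) = R + (fun x => (1 / k) * Real.exp (k * (R x - F))) *
      (fun x : ℝ => Real.cos (k * (x - c * t))) := by
    funext x
    exact heq x
  rw [h5] at h4
  have h6 := h4.unique h3
  have hq := heq q
  have hE := hlt q
  have hE0 := Real.exp_pos (k * (R q - F))
  have hcos := Real.neg_one_le_cos (k * (q - c * t))
  generalize Real.exp (k * (R q - F)) = E at *
  generalize Real.cos (k * (q - c * t)) = C at *
  generalize Real.sin (k * (q - c * t)) = S at *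
  have h7 : D * (1 + E * C) = E * S := by
    field_simp at h6
    linarith
  have h8 : 0 < 1 + E * C := by nlinarith
  refine ⟨⟨fun h => ?_, fun h => ?_⟩, fun _ => ⟨fun h => ?_, fun h => ?_⟩⟩
  · rw [h, zero_mul] at h7
    exact (mul_eq_zero.mp h7.symm).resolve_left hE0.ne'
  · rw [h, mul_zero] at h7
    exact (mul_eq_zero.mp h7).resolve_right h8.ne'
  · rw [h] at hq
    linarith
  · rw [h] at hq
    linarith
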